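/- Arrangement commutes with zipping: for all multisets m : Sym X K and n : Sym Y K, (mzip m n).bind arr = (arr m).bind (fun a => PMF.map (fun b => fun i => (a i, b i)) (arr n)), as distributions on Fin K → X × Y. -/

import Mathlib

universe u

/-- Accumulation: send a tuple to its multiset of values. -/
def acc {X : Type u} {K : ℕ} (v : Fin K → X) : Sym X K :=
  ⟨(List.ofFn v : List X), by simp⟩

/-- Pushforward of the uniform distribution on permutations under `σ ↦ v ∘ σ`. -/
noncomputable def perm {X : Type u} {K : ℕ} (v : Fin K → X) : PMF (Fin K → X) :=
  PMF.map (fun σ => v ∘ σ) (PMF.uniformOfFintype (Equiv.Perm (Fin K)))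

theorem acc_surj_aux {X : Type u} {K : ℕ} (m : Sym X K) : ∃ v : Fin K → X, acc v = m := by
  obtain ⟨s, hs⟩ := m
  induction s using Quotient.inductionOn with
  | h l =>
    have hl : l.length = K := by simpa using hs
    subst hl
    refine ⟨l.get, ?_⟩
    apply Subtype.ext
    simp [acc]

theorem unif_mul_aux {K : ℕ} {A : Type u} (ρ : Equiv.Perm (Fin K))
    (f : Equiv.Perm (Fin K) → PMF A) :
    (PMF.uniformOfFintype (Equiv.Perm (Fin K))).bind (fun σ => f (σ * ρ)) =
      (PMF.uniformOfFintype (Equiv.Perm (Fin K))).bind f := by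
  ext a
  simp only [PMF.bind_apply, PMF.uniformOfFintype_apply]
  exact (Equiv.mulRight ρ).tsum_eq (fun σ => _ * (f σ) a)

theorem perm_eq_aux {X : Type u} {K : ℕ} (v : Fin K → X) :
    perm v = (PMF.uniformOfFintype (Equiv.Perm (Fin K))).bind
      (fun σ => PMF.pure (fun i => v (σ i))) := by
  unfold perm
  change PMF.map _ (PMF.bind _ (fun σ : Equiv.Perm (Fin K) => PMF.pure (⇑σ))) = _
  simp only [PMF.map, PMF.bind_bind, PMF.pure_bind, Function.comp_def]

/-- Arrangement commutes with zipping: arranging the multizip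
`mzip m n = (arr m).bind (fun a => PMF.map (fun b => acc (fun i => (a i, b i))) (arr n))`
equals zipping the two arrangements pointwise. -/
theorem arr_mzip {X Y : Type u} {K : ℕ}
    (arr : {Z : Type u} → {n : ℕ} → Sym Z n → PMF (Fin n → Z))
    (harr : ∀ {Z : Type u} {n : ℕ} (v : Fin n → Z), arr (acc v) = perm v)
    (m : Sym X K) (n : Sym Y K) :
    ((arr m).bind (fun a => PMF.map (fun b => acc (fun i => (a i, b i))) (arr n))).bind arr =
      (arr m).bind (fun a => PMF.map (fun b => fun i => (a i, b i)) (arr n)) := by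
  obtain ⟨v, rfl⟩ := acc_surj_aux m
  obtain ⟨w, rfl⟩ := acc_surj_aux n
  rw [harr, harr]
  simp only [perm_eq_aux, PMF.map, PMF.bind_bind, PMF.pure_bind, Function.comp_def, harr]
  set U := PMF.uniformOfFintype (Equiv.Perm (Fin K)) with hU
  have h1 : ∀ σ : Equiv.Perm (Fin K),
      (U.bind fun τ => U.bind fun ρ =>
        PMF.pure (fun i => (v (σ (ρ i)), w (τ (ρ i))))) =
      U.bind fun ρ => U.bind fun τ => PMF.pure (fun i => (v (σ (ρ i)), w (τ i))) := by
    intro σ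
    rw [PMF.bind_comm]
    congr 1
    funext ρ
    exact unif_mul_aux ρ (fun τ => PMF.pure (fun i => (v (σ (ρ i)), w (τ i))))
  simp only [h1]
  rw [PMF.bind_comm]
  have h2 : ∀ ρ : Equiv.Perm (Fin K),
      (U.bind fun σ => U.bind fun τ => PMF.pure (fun i => (v (σ (ρ i)), w (τ i)))) =
      U.bind fun σ => U.bind fun τ => PMF.pure (fun i => (v (σ i), w (τ i))) := fun ρ =>
    unif_mul_aux ρ (fun σ => U.bind fun τ => PMF.pure (fun i => (v (σ i), w (τ i))))
  simp only [h2, PMF.bind_const]
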